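/- The series ∑_{n=3}^∞ log(n)·n^{-4} converges and its sum is at most 0.025590. -/

import Mathlib

/-- An upper bound for the logarithm on `[1, ∞)`. -/
lemma log_le_half_sub_inv {y : ℝ} (hy : 1 ≤ y) : Real.log y ≤ (y - y⁻¹) / 2 := by
  have hd : ∀ x : ℝ, 0 < x → HasDerivAt (fun t : ℝ => (t - t⁻¹) / 2 - Real.log t)
      ((1 - -(x ^ 2)⁻¹) / 2 - x⁻¹) x := by
    intro x hx
    exact (((hasDerivAt_id x).sub (hasDerivAt_inv hx.ne')).div_const 2).sub
      (Real.hasDerivAt_log hx.ne')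
  have hm : MonotoneOn (fun t : ℝ => (t - t⁻¹) / 2 - Real.log t) (Set.Ici 1) := by
    apply monotoneOn_of_deriv_nonneg (convex_Ici 1)
    · intro x hx
      have hx' : (1 : ℝ) ≤ x := hx
      exact (hd x (by linarith)).continuousAt.continuousWithinAt
    · intro x hx
      rw [interior_Ici] at hx
      have hx' : (1 : ℝ) < x := hx
      exact (hd x (by linarith)).differentiableAt.differentiableWithinAt
    · intro x hx
      rw [interior_Ici] at hx
      have hx' : (1 : ℝ) < x := hx
      rw [(hd x (by linarith)).deriv, ← inv_pow]
      nlinarith [sq_nonneg (1 - x⁻¹)]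
  have h := hm (Set.mem_Ici.2 le_rfl) (Set.mem_Ici.2 hy) hy
  norm_num at h
  linarith

/-- The telescoping majorant. -/
noncomputable def tailG (x : ℝ) : ℝ :=
  Real.log x * (1 / (3 * (x - 1 / 2) ^ 3)) + 1 / (9 * x ^ 3)

lemma tail_step {x : ℝ} (hx : 1 ≤ x) :
    Real.log x * x ^ (-4 : ℤ) ≤ tailG x - tailG (x + 1) := by
  have hx0 : 0 < x := by linarith
  have hp : 0 < x - 1 / 2 := by linarith
  have hq : 0 < x + 1 / 2 := by linarith
  have hl : 0 ≤ Real.log x := Real.log_nonneg hx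
  have hA : x ^ (-4 : ℤ) ≤ 1 / (3 * (x - 1 / 2) ^ 3) - 1 / (3 * (x + 1 / 2) ^ 3) := by
    have e : x ^ (-4 : ℤ) = 1 / x ^ 4 := by
      rw [zpow_neg, one_div]; norm_cast
    have e2 : 1 / (3 * (x - 1 / 2) ^ 3) - 1 / (3 * (x + 1 / 2) ^ 3)
        = (3 * x ^ 2 + 1 / 4) / (3 * ((x - 1 / 2) * (x + 1 / 2)) ^ 3) := by
      rw [div_sub_div _ _ (by positivity) (by positivity),
        div_eq_div_iff (by positivity) (by positivity)]
      ring
    rw [e, e2, div_le_div_iff₀ (by positivity) (by positivity)]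
    have h1 : (1 : ℝ) ≤ x ^ 2 := by nlinarith
    have e3 : ((x - 1 / 2) * (x + 1 / 2)) = x ^ 2 - 1 / 4 := by ring
    rw [e3]
    nlinarith [mul_nonneg (by positivity : 0 ≤ x ^ 2) (by positivity : 0 ≤ x ^ 2), h1]
  have hlog : Real.log (x + 1) ≤ Real.log x + (x + 1 / 2) / (x * (x + 1)) := by
    have h := log_le_half_sub_inv (y := (x + 1) / x) (by rw [le_div_iff₀ hx0]; linarith)
    rw [Real.log_div (by positivity) (by positivity)] at h
    have e : ((x + 1) / x - ((x + 1) / x)⁻¹) / 2 = (x + 1 / 2) / (x * (x + 1)) := by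
      field_simp; ring
    linarith
  have hB : (x + 1 / 2) / (x * (x + 1)) * (1 / (3 * (x + 1 / 2) ^ 3))
      ≤ 1 / (9 * x ^ 3) - 1 / (9 * (x + 1) ^ 3) := by
    have e1 : (x + 1 / 2) / (x * (x + 1)) * (1 / (3 * (x + 1 / 2) ^ 3))
        = 1 / (3 * (x * (x + 1)) * (x + 1 / 2) ^ 2) := by
      field_simp
    have e2 : 1 / (9 * x ^ 3) - 1 / (9 * (x + 1) ^ 3)
        = ((3 * x ^ 2 + 3 * x + 1) / (3 * (x * (x + 1)) ^ 2)) / (3 * (x * (x + 1))) := by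
      field_simp; ring
    have e3 : 1 / (3 * (x * (x + 1)) * (x + 1 / 2) ^ 2)
        = (1 / (x + 1 / 2) ^ 2) / (3 * (x * (x + 1))) := by
      field_simp
    rw [e1, e2, e3]
    apply div_le_div_of_nonneg_right _ (by positivity)
    rw [div_le_div_iff₀ (by positivity) (by positivity)]
    nlinarith [sq_nonneg x]
  have e : x + 1 - 1 / 2 = x + 1 / 2 := by ring
  unfold tailG
  rw [e]
  have h1 := mul_le_mul_of_nonneg_left hA hl
  have h2 := mul_le_mul_of_nonneg_right hlog
    (by positivity : 0 ≤ 1 / (3 * (x + 1 / 2) ^ 3))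
  linarith

lemma tailG_nonneg {x : ℝ} (hx : 1 ≤ x) : 0 ≤ tailG x := by
  have hp : 0 < x - 1 / 2 := by linarith
  have := Real.log_nonneg hx
  unfold tailG
  positivity

lemma log_sq_le {p m : ℝ} (hm : 0 < m) (hp : 0 < p) (h : p ^ 2 = m + 1) :
    2 * Real.log p ≤ Real.log m + ((m + 1) / m - m / (m + 1)) / 2 := by
  have h1 := log_le_half_sub_inv (y := (m + 1) / m) (by rw [le_div_iff₀ hm]; linarith)
  rw [Real.log_div (by positivity) (by positivity), ← h, Real.log_pow, inv_div, h] at h1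
  push_cast at h1
  linarith

lemma base_bound :
    ∑ n ∈ Finset.range 17, Real.log ((n : ℝ) + 3) * ((n : ℝ) + 3) ^ (-4 : ℤ)
      ≤ 0.025590 - tailG 20 := by
  have l2 := Real.log_two_lt_d9
  have l3 := Real.log_three_lt_d9
  have l5 := Real.log_five_lt_d9
  have m2 (a b : ℝ) (ha : a ≠ 0) (hb : b ≠ 0) := Real.log_mul ha hb
  have l4 : Real.log 4 = 2 * Real.log 2 := by
    rw [show (4 : ℝ) = 2 ^ 2 by norm_num, Real.log_pow]; norm_num
  have l6 : Real.log 6 = Real.log 2 + Real.log 3 := by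
    rw [← m2 2 3 (by norm_num) (by norm_num)]; norm_num
  have l8 : Real.log 8 = 3 * Real.log 2 := by
    rw [show (8 : ℝ) = 2 ^ 3 by norm_num, Real.log_pow]; norm_num
  have l9 : Real.log 9 = 2 * Real.log 3 := by
    rw [show (9 : ℝ) = 3 ^ 2 by norm_num, Real.log_pow]; norm_num
  have l10 : Real.log 10 = Real.log 2 + Real.log 5 := by
    rw [← m2 2 5 (by norm_num) (by norm_num)]; norm_num
  have l12 : Real.log 12 = Real.log 4 + Real.log 3 := by
    rw [← m2 4 3 (by norm_num) (by norm_num)]; norm_num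
  have l14 : Real.log 14 = Real.log 2 + Real.log 7 := by
    rw [← m2 2 7 (by norm_num) (by norm_num)]; norm_num
  have l15 : Real.log 15 = Real.log 3 + Real.log 5 := by
    rw [← m2 3 5 (by norm_num) (by norm_num)]; norm_num
  have l16 : Real.log 16 = 4 * Real.log 2 := by
    rw [show (16 : ℝ) = 2 ^ 4 by norm_num, Real.log_pow]; norm_num
  have l18 : Real.log 18 = Real.log 2 + Real.log 9 := by
    rw [← m2 2 9 (by norm_num) (by norm_num)]; norm_num
  have l20 : Real.log 20 = Real.log 4 + Real.log 5 := by
    rw [← m2 4 5 (by norm_num) (by norm_num)]; norm_num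
  have l48 : Real.log 48 = Real.log 16 + Real.log 3 := by
    rw [← m2 16 3 (by norm_num) (by norm_num)]; norm_num
  have l120 : Real.log 120 = Real.log 8 + Real.log 15 := by
    rw [← m2 8 15 (by norm_num) (by norm_num)]; norm_num
  have l168 : Real.log 168 = Real.log 12 + Real.log 14 := by
    rw [← m2 12 14 (by norm_num) (by norm_num)]; norm_num
  have l288 : Real.log 288 = Real.log 16 + Real.log 18 := by
    rw [← m2 16 18 (by norm_num) (by norm_num)]; norm_num
  have l360 : Real.log 360 = Real.log 18 + Real.log 20 := by
    rw [← m2 18 20 (by norm_num) (by norm_num)]; norm_num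
  have l7 := log_sq_le (p := 7) (m := 48) (by norm_num) (by norm_num) (by norm_num)
  have l11 := log_sq_le (p := 11) (m := 120) (by norm_num) (by norm_num) (by norm_num)
  have l13 := log_sq_le (p := 13) (m := 168) (by norm_num) (by norm_num) (by norm_num)
  have l17 := log_sq_le (p := 17) (m := 288) (by norm_num) (by norm_num) (by norm_num)
  have l19 := log_sq_le (p := 19) (m := 360) (by norm_num) (by norm_num) (by norm_num)
  unfold tailG
  simp only [Finset.sum_range_succ, Finset.sum_range_zero]
  clear m2
  norm_num at l7 l11 l13 l17 l19 l2 l3 l5 ⊢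
  linarith

/-- The series `∑_{n=3}^∞ log(n) · n^(-4)` converges and its sum is at most
`0.025590`. -/
theorem summable_log_div_pow_four_and_tsum_le :
    Summable (fun n : ℕ => Real.log (n + 3) * ((n : ℝ) + 3) ^ (-4 : ℤ)) ∧
      ∑' n : ℕ, Real.log (n + 3) * ((n : ℝ) + 3) ^ (-4 : ℤ) ≤ 0.025590 := by
  have hn : ∀ n : ℕ, 0 ≤ Real.log ((n : ℝ) + 3) * ((n : ℝ) + 3) ^ (-4 : ℤ) := by
    intro n
    have h0 : (0 : ℝ) ≤ n := n.cast_nonneg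
    have := Real.log_nonneg (by linarith : (1 : ℝ) ≤ (n : ℝ) + 3)
    positivity
  have hk : ∀ k : ℕ, ∑ n ∈ Finset.range (k + 17),
      Real.log ((n : ℝ) + 3) * ((n : ℝ) + 3) ^ (-4 : ℤ) ≤ 0.025590 - tailG (k + 20) := by
    intro k
    induction k with
    | zero => simpa using base_bound
    | succ k ih =>
      have h0 : (0 : ℝ) ≤ k := k.cast_nonneg
      have hs := tail_step (x := (k : ℝ) + 20) (by linarith)
      rw [show k + 1 + 17 = (k + 17) + 1 by ring, Finset.sum_range_succ]
      have e : ((k + 17 : ℕ) : ℝ) + 3 = (k : ℝ) + 20 := by push_cast; ring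
      have e' : ((k + 1 : ℕ) : ℝ) + 20 = (k : ℝ) + 20 + 1 := by push_cast; ring
      rw [e, e']
      linarith
  have hb : ∀ k : ℕ, ∑ n ∈ Finset.range k,
      Real.log ((n : ℝ) + 3) * ((n : ℝ) + 3) ^ (-4 : ℤ) ≤ 0.025590 := by
    intro k
    have h0 : (0 : ℝ) ≤ k := k.cast_nonneg
    have h1 := Finset.sum_le_sum_of_subset_of_nonneg
      (Finset.range_mono (Nat.le_add_right k 17)) (fun n _ _ => hn n)
    have h2 := tailG_nonneg (x := (k : ℝ) + 20) (by linarith)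
    linarith [hk k]
  exact ⟨summable_of_sum_range_le hn hb, Real.tsum_le_of_sum_range_le hn hb⟩
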